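/- For every prime p with 61 < p and p ≠ 79, there exists an S₁-type subset A ⊆ F_p with |A|² < p − 1 (in other words, S₁(p)² < p − 1 where S₁(p) is the minimal size of an S₁-type subset of F_p). -/

import Mathlib

/-- Large case: the set of `0` and all `±⌊p / 2 ^ i⌋`, `1 ≤ i ≤ log₂ p`, is of S₁-type. -/
theorem large_case (p : ℕ) (hp : p.Prime) (h61 : 61 < p)
    (h : (1 + 2 * Nat.log 2 p) ^ 2 < p - 1) :
    ∃ A : Finset (ZMod p), A.Nonempty ∧
      (∀ a ∈ A, ∃ b ∈ A, ∃ c ∈ A, 2 * a = b + c ∧ b ≠ a) ∧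
      A.card ^ 2 < p - 1 := by
  classical
  have : Fact p.Prime := ⟨hp⟩
  set k := Nat.log 2 p with hk
  let n : ℕ → ZMod p := fun i => ((p / 2 ^ i : ℕ) : ZMod p)
  let A : Finset (ZMod p) := insert 0
    ((Finset.Icc 1 k).image n ∪ (Finset.Icc 1 k).image (fun i => - n i))
  have hk1 : 1 ≤ k := by
    rw [hk]; exact Nat.log_pos (by norm_num) (by omega)
  have hn0 : n 0 = 0 := by simp [n]
  have hnk : n k = 1 := by
    have h1 : 2 ^ k ≤ p := Nat.pow_log_le_self 2 (by omega)
    have h2 : p < 2 ^ (k + 1) := Nat.lt_pow_succ_log_self (by norm_num) p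
    have : p / 2 ^ k = 1 := by
      rw [pow_succ] at h2
      apply Nat.div_eq_of_lt_le <;> omega
    simp [n, this]
  have hpos : ∀ i, i ≤ k → n i ∈ A := by
    intro i hi
    rcases Nat.eq_zero_or_pos i with h0 | h0
    · subst h0; rw [hn0]; simp [A]
    · exact Finset.mem_insert_of_mem (Finset.mem_union_left _
        (Finset.mem_image_of_mem _ (Finset.mem_Icc.2 ⟨h0, hi⟩)))
  have hneg : ∀ i, i ≤ k → - n i ∈ A := by
    intro i hi
    rcases Nat.eq_zero_or_pos i with h0 | h0
    · subst h0; rw [hn0]; simp [A]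
    · exact Finset.mem_insert_of_mem (Finset.mem_union_right _
        (Finset.mem_image_of_mem (fun i => - n i) (Finset.mem_Icc.2 ⟨h0, hi⟩)))
  have h0A : (0 : ZMod p) ∈ A := by simp [A]
  have h1A : (1 : ZMod p) ∈ A := hnk ▸ hpos k le_rfl
  have hm1A : (-1 : ZMod p) ∈ A := hnk ▸ hneg k le_rfl
  -- the halving step
  have step : ∀ i, 1 ≤ i → i ≤ k →
      n (i - 1) ≠ n i ∧ (2 * n i = n (i - 1) + 0 ∨ 2 * n i = n (i - 1) + (-1)) := by
    intro i h1 hi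
    obtain ⟨j, rfl⟩ : ∃ j, i = j + 1 := ⟨i - 1, by omega⟩
    have hd : p / 2 ^ (j + 1) = p / 2 ^ j / 2 := by
      rw [pow_succ, Nat.div_div_eq_div_mul]
    have hle : p / 2 ^ j ≤ p := Nat.div_le_self _ _
    have hge : 1 ≤ p / 2 ^ j := by
      apply Nat.div_pos _ (by positivity)
      exact le_trans (Nat.pow_le_pow_right (by norm_num) (by omega))
        (Nat.pow_log_le_self 2 (by omega : p ≠ 0))
    have hge' : 1 ≤ p / 2 ^ j / 2 := by
      rw [← hd]
      apply Nat.div_pos _ (by positivity)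
      exact le_trans (Nat.pow_le_pow_right (by norm_num) hi)
        (Nat.pow_log_le_self 2 (by omega : p ≠ 0))
    simp only [Nat.add_sub_cancel, n, hd]
    generalize p / 2 ^ j = m at *
    refine ⟨?_, ?_⟩
    · intro he
      have h3 : ((m - m / 2 : ℕ) : ZMod p) = 0 := by
        rw [Nat.cast_sub (by omega), he, sub_self]
      rw [ZMod.natCast_eq_zero_iff] at h3
      have := Nat.le_of_dvd (by omega) h3
      omega
    · rcases Nat.even_or_odd' m with ⟨t, rfl | rfl⟩
      · left
        have : 2 * t / 2 = t := by omega
        rw [this]; push_cast; ring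
      · right
        have : (2 * t + 1) / 2 = t := by omega
        rw [this]; push_cast; ring
  refine ⟨A, ⟨0, h0A⟩, ?_, ?_⟩
  · intro a ha
    simp only [A, Finset.mem_insert, Finset.mem_union, Finset.mem_image, Finset.mem_Icc] at ha
    rcases ha with rfl | ⟨i, ⟨h1, h2⟩, rfl⟩ | ⟨i, ⟨h1, h2⟩, rfl⟩
    · exact ⟨1, h1A, -1, hm1A, by ring, one_ne_zero⟩
    · obtain ⟨hne, he | he⟩ := step i h1 h2
      · exact ⟨_, hpos (i - 1) (by omega), 0, h0A, he, hne⟩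
      · exact ⟨_, hpos (i - 1) (by omega), -1, hm1A, he, hne⟩
    · obtain ⟨hne, he | he⟩ := step i h1 h2
      · exact ⟨_, hneg (i - 1) (by omega), 0, h0A, by linear_combination -he,
          fun h => hne (neg_injective h)⟩
      · exact ⟨_, hneg (i - 1) (by omega), 1, h1A, by linear_combination -he,
          fun h => hne (neg_injective h)⟩
  · refine lt_of_le_of_lt (Nat.pow_le_pow_left ?_ 2) h
    have c1 : A.card ≤ _ + 1 := Finset.card_insert_le _ _
    have c2 := Finset.card_union_le ((Finset.Icc 1 k).image n)
      ((Finset.Icc 1 k).image (fun i => - n i))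
    have c3 : ((Finset.Icc 1 k).image n).card ≤ _ := Finset.card_image_le
    have c4 : ((Finset.Icc 1 k).image (fun i => - n i)).card ≤ _ := Finset.card_image_le
    rw [Nat.card_Icc] at c3 c4
    omega

theorem log_bound (k : ℕ) (hk : 9 ≤ k) : (1 + 2 * k) ^ 2 + 1 < 2 ^ k := by
  induction k, hk using Nat.le_induction with
  | base => norm_num
  | succ k hk ih => rw [pow_succ 2 k]; nlinarith

/-- Tabulated sets for the small primes the general construction does not reach. -/
def smallTable : List (ℕ × List ℕ) :=
  [(67, [0, 1, 3, 16, 31, 57, 62, 66]),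
   (71, [0, 1, 3, 17, 33, 44, 66, 70]),
   (73, [0, 1, 3, 11, 21, 42, 68, 72]),
   (83, [0, 1, 2, 6, 13, 43, 66, 81, 82]),
   (89, [0, 1, 2, 7, 39, 64, 76, 86, 88]),
   (97, [0, 1, 2, 7, 42, 69, 84, 94, 96]),
   (101, [0, 1, 2, 8, 15, 31, 62, 97, 100]),
   (103, [0, 1, 2, 8, 16, 56, 79, 99, 102]),
   (107, [0, 1, 2, 7, 27, 54, 94, 104, 106]),
   (109, [0, 1, 2, 8, 47, 78, 93, 105, 108]),
   (113, [0, 1, 2, 8, 48, 81, 97, 109, 112]),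
   (127, [0, 1, 2, 8, 32, 63, 111, 123, 126]),
   (131, [0, 1, 3, 11, 22, 44, 77, 126, 130]),
   (137, [0, 1, 3, 11, 53, 74, 106, 132, 136]),
   (139, [0, 1, 3, 11, 22, 43, 86, 134, 138]),
   (149, [0, 1, 3, 11, 64, 107, 128, 144, 148]),
   (151, [0, 1, 3, 11, 65, 108, 130, 146, 150]),
   (157, [0, 1, 2, 6, 13, 43, 80, 140, 155, 156]),
   (163, [0, 1, 2, 7, 27, 55, 110, 150, 160, 162]),
   (167, [0, 1, 2, 7, 39, 78, 142, 154, 164, 166]),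
   (173, [0, 1, 2, 5, 21, 85, 130, 162, 170, 172]),
   (179, [0, 1, 2, 7, 69, 124, 151, 166, 176, 178]),
   (181, [0, 1, 2, 7, 70, 125, 153, 168, 178, 180]),
   (191, [0, 1, 2, 7, 27, 55, 110, 178, 188, 190]),
   (193, [0, 1, 2, 7, 15, 51, 100, 172, 190, 192]),
   (197, [0, 1, 2, 8, 15, 53, 98, 174, 193, 196]),
   (199, [0, 1, 2, 8, 16, 88, 143, 175, 195, 198]),
   (211, [0, 1, 2, 8, 81, 146, 178, 195, 207, 210]),
   (223, [0, 1, 2, 8, 32, 64, 127, 207, 219, 222]),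
   (257, [0, 1, 2, 8, 32, 128, 193, 241, 253, 256]),
   (263, [0, 1, 3, 11, 53, 137, 200, 232, 258, 262]),
   (269, [0, 1, 3, 11, 22, 119, 194, 237, 264, 268]),
   (271, [0, 1, 3, 19, 38, 46, 73, 145, 231, 270]),
   (277, [0, 1, 3, 11, 107, 192, 235, 256, 272, 276]),
   (281, [0, 1, 3, 11, 65, 130, 238, 260, 276, 280]),
   (283, [0, 1, 2, 6, 22, 45, 88, 175, 273, 281, 282])]

/-- Boolean test that a list of residues is a nonempty S₁-type set of small enough size. -/
def goodEntry (p : ℕ) (l : List ℕ) : Bool :=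
  l.length != 0 && decide (l.length ^ 2 < p - 1) && l.all fun a => l.any fun b => l.any fun c =>
    (2 * a) % p == (b + c) % p && a % p != b % p

theorem smallTable_good : (smallTable.all fun e => goodEntry e.1 e.2) = true := by
  decide +kernel

theorem small_case (p : ℕ) (l : List ℕ) (h : goodEntry p l = true) :
    ∃ A : Finset (ZMod p), A.Nonempty ∧
      (∀ a ∈ A, ∃ b ∈ A, ∃ c ∈ A, 2 * a = b + c ∧ b ≠ a) ∧
      A.card ^ 2 < p - 1 := by
  classical
  simp only [goodEntry, Bool.and_eq_true, bne_iff_ne, decide_eq_true_eq, List.all_eq_true,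
    List.any_eq_true, beq_iff_eq] at h
  obtain ⟨⟨h0, h1⟩, h2⟩ := h
  refine ⟨(l.map (fun a : ℕ => (a : ZMod p))).toFinset, ?_, ?_, ?_⟩
  · obtain ⟨a, ha⟩ := List.exists_mem_of_length_pos (Nat.pos_of_ne_zero h0)
    exact ⟨a, List.mem_toFinset.2 (List.mem_map.2 ⟨a, ha, rfl⟩)⟩
  · intro x hx
    obtain ⟨a, ha, rfl⟩ := List.mem_map.1 (List.mem_toFinset.1 hx)
    obtain ⟨b, hb, c, hc, he, hne⟩ := h2 a ha
    refine ⟨b, List.mem_toFinset.2 (List.mem_map.2 ⟨b, hb, rfl⟩),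
      c, List.mem_toFinset.2 (List.mem_map.2 ⟨c, hc, rfl⟩), ?_, ?_⟩
    · have := (ZMod.natCast_eq_natCast_iff (2 * a) (b + c) p).2 he
      push_cast at this
      exact this
    · intro h
      exact hne ((ZMod.natCast_eq_natCast_iff b a p).1 h).symm
  · refine lt_of_le_of_lt (Nat.pow_le_pow_left ?_ 2) h1
    exact (List.toFinset_card_le _).trans (by simp)

/-- Every number below 512 without a prime factor at most 19 is tabulated, or lies in a range where
the hypothesis of `large_case` holds. -/
theorem cover_bool : ((List.range 512).all fun p =>
    decide (p ≤ 61) || p == 79 || ([2, 3, 5, 7, 11, 13, 17, 19].any fun q => p % q == 0) ||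
    (decide (226 < p) && decide (p < 256)) || decide (290 < p) ||
    (smallTable.any fun e => e.1 == p)) = true := by
  decide +kernel

theorem cover (p : ℕ) (h : p < 512) (h61 : 61 < p) (h79 : p ≠ 79)
    (hq : ∀ q ∈ [2, 3, 5, 7, 11, 13, 17, 19], p % q ≠ 0) :
    ((226 < p ∧ p < 256) ∨ 290 < p) ∨ ∃ e ∈ smallTable, e.1 = p := by
  have h1 := List.all_eq_true.1 cover_bool p (List.mem_range.2 h)
  simp only [Bool.or_eq_true, Bool.and_eq_true, decide_eq_true_eq, beq_iff_eq,
    List.any_eq_true] at h1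
  rcases h1 with ((((h1 | h1) | ⟨q, hq1, hq2⟩) | h1) | h1) | h1
  · omega
  · exact absurd h1 h79
  · exact absurd hq2 (hq q hq1)
  · exact Or.inl (Or.inl h1)
  · exact Or.inl (Or.inr h1)
  · exact Or.inr h1

/-- The intended theorem, with the S₁-type set required to be nonempty. -/
theorem nonempty_version (p : ℕ) (hp : p.Prime) (h61 : 61 < p) (h79 : p ≠ 79) :
    ∃ A : Finset (ZMod p), A.Nonempty ∧
      (∀ a ∈ A, ∃ b ∈ A, ∃ c ∈ A, 2 * a = b + c ∧ b ≠ a) ∧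
      A.card ^ 2 < p - 1 := by
  have key : (1 + 2 * Nat.log 2 p) ^ 2 < p - 1 ∨ ∃ e ∈ smallTable, e.1 = p := by
    rcases lt_or_ge p 512 with h | h
    · have hq : ∀ q ∈ [2, 3, 5, 7, 11, 13, 17, 19], p % q ≠ 0 := by
        intro q hq h0
        have hq' : q ≠ 1 ∧ q < 61 := by
          simp only [List.mem_cons, List.not_mem_nil, or_false] at hq
          omega
        rcases (Nat.dvd_prime hp).1 (Nat.dvd_of_mod_eq_zero h0) with h1 | h1 <;> omega
      rcases cover p h h61 h79 hq with (⟨h1, h2⟩ | h1) | h1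
      · left
        have h3 : Nat.log 2 p < 8 := Nat.log_lt_of_lt_pow (by omega) (by omega)
        have h4 : (1 + 2 * Nat.log 2 p) ^ 2 ≤ 15 ^ 2 := Nat.pow_le_pow_left (by omega) 2
        omega
      · left
        have h3 : Nat.log 2 p < 9 := Nat.log_lt_of_lt_pow (by omega) (by omega)
        have h4 : (1 + 2 * Nat.log 2 p) ^ 2 ≤ 17 ^ 2 := Nat.pow_le_pow_left (by omega) 2
        omega
      · exact Or.inr h1
    · left
      have h9 : 9 ≤ Nat.log 2 p := Nat.le_log_of_pow_le (by norm_num) (by simpa using h)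
      have h1 := log_bound _ h9
      have h2 : 2 ^ Nat.log 2 p ≤ p := Nat.pow_log_le_self 2 (by omega)
      omega
  rcases key with h | ⟨e, he, rfl⟩
  · exact large_case p hp h61 h
  · exact small_case e.1 e.2 (List.all_eq_true.1 smallTable_good e he)

/-- For every prime `p` with `61 < p ≠ 79` there is an S₁-type subset `A ⊆ F_p` with
`|A|² < p - 1`. -/
theorem stmt_4 (p : ℕ) (hp : p.Prime) (h61 : 61 < p) (h79 : p ≠ 79) :
    ∃ A : Finset (ZMod p),
      (∀ a ∈ A, ∃ b ∈ A, ∃ c ∈ A, 2 * a = b + c ∧ b ≠ a) ∧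
      A.card ^ 2 < p - 1 := by
  obtain ⟨A, _, hA⟩ := nonempty_version p hp h61 h79
  exact ⟨A, hA⟩
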